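/- Let φ(v) denote the 2×2 complex matrix [[1, v],[0, 1]], and let S ⊆ M₂(ℂ) × ℂ be the set S = { ( φ(v⁻¹) · [[a, 0],[0, a⁻¹]] · φ(−v⁻¹) , v ) : a ∈ ℂ, a ≠ 0, v ∈ ℂ, v ≠ 0 }. Then the fibre over 0 of the closure of S equals the set of all unipotent upper triangular matrices together with their negatives; that is, { M ∈ M₂(ℂ) : (M, 0) ∈ closure(S) } = { φ(u) : u ∈ ℂ } ∪ { −φ(u) : u ∈ ℂ }. -/

import Mathlib

open Matrix

/-- `φ(v) = [[1, v], [0, 1]]`, the unipotent upper triangular matrices. -/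
def phi (v : ℂ) : Matrix (Fin 2) (Fin 2) ℂ := !![1, v; 0, 1]

/-- The set `S = { (φ(v⁻¹) · diag(a, a⁻¹) · φ(-v⁻¹), v) : a ≠ 0, v ≠ 0 }`
of pairs (conjugated torus element, parameter). -/
def conjTorusFamily : Set (Matrix (Fin 2) (Fin 2) ℂ × ℂ) :=
  {q | ∃ a v : ℂ, a ≠ 0 ∧ v ≠ 0 ∧
    q = (phi v⁻¹ * !![a, 0; 0, a⁻¹] * phi (-v⁻¹), v)}

theorem conj_formula (a v : ℂ) : phi v⁻¹ * !![a, 0; 0, a⁻¹] * phi (-v⁻¹)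
    = !![a, v⁻¹ * (a⁻¹ - a); 0, a⁻¹] := by
  ext i j
  fin_cases i <;> fin_cases j <;> simp [phi, Matrix.mul_apply, Fin.sum_univ_two]
  ring

theorem mem_closure_aux (s u : ℂ) (hs : s * s = 1) :
    ((!![s, s * u; 0, s] : Matrix (Fin 2) (Fin 2) ℂ), (0 : ℂ)) ∈ closure conjTorusFamily := by
  have hs0 : s ≠ 0 := by
    rintro rfl
    simp at hs
  have hsi : s⁻¹ = s := by
    field_simp
    rw [pow_two, hs]
  let f : ℂ → Matrix (Fin 2) (Fin 2) ℂ × ℂ := fun t =>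
    (!![s * (1 - t * u / 2), s * ((u - t * u ^ 2 / 4) * (1 - t * u / 2)⁻¹);
        0, s * (1 - t * u / 2)⁻¹], t)
  have h1 : ContinuousAt (fun t : ℂ => (1 - t * u / 2)) 0 := by fun_prop
  have h2 : ContinuousAt (fun t : ℂ => (1 - t * u / 2)⁻¹) 0 := h1.inv₀ (by simp)
  have hf : ContinuousAt f 0 := by
    refine ContinuousAt.prodMk ?_ continuousAt_id
    refine continuousAt_pi.2 fun i => continuousAt_pi.2 fun j => ?_
    fin_cases i <;> fin_cases j <;> simp <;> fun_prop
  have hf0 : f 0 = (!![s, s * u; 0, s], 0) := by simp [f]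
  have ht : Filter.Tendsto f (nhdsWithin 0 {0}ᶜ) (nhds (!![s, s * u; 0, s], 0)) := by
    rw [← hf0]
    exact hf.tendsto.mono_left nhdsWithin_le_nhds
  refine mem_closure_of_tendsto ht ?_
  have hne : ∀ᶠ t : ℂ in nhdsWithin 0 {0}ᶜ, (1 - t * u / 2) ≠ 0 :=
    (h1.eventually_ne (by simp)).filter_mono nhdsWithin_le_nhds
  filter_upwards [hne, self_mem_nhdsWithin] with t h3 h4
  have h4' : t ≠ 0 := h4
  refine ⟨s * (1 - t * u / 2), t, mul_ne_zero hs0 h3, h4', ?_⟩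
  rw [conj_formula, mul_inv, hsi]
  have key : s * ((u - t * u ^ 2 / 4) * (1 - t * u / 2)⁻¹)
      = t⁻¹ * (s * (1 - t * u / 2)⁻¹ - s * (1 - t * u / 2)) := by
    generalize hw : (1 - t * u / 2) = w at *
    have hw2 : u = 2 * (1 - w) / t := by
      rw [← hw]; field_simp; ring
    rw [hw2]
    field_simp
    ring
  simp only [f, key]

/-- The fibre over `0` of the closure of the family `𝓗` of conjugated tori is
`𝔘 ∪ (-𝔘)`: the unipotent upper triangular matrices together with their negatives. -/
theorem fibre_at_zero_of_closure :
    {M : Matrix (Fin 2) (Fin 2) ℂ | (M, 0) ∈ closure conjTorusFamily}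
      = {M | ∃ u : ℂ, M = phi u} ∪ {M | ∃ u : ℂ, M = -phi u} := by
  ext M
  simp only [Set.mem_setOf_eq, Set.mem_union]
  constructor
  · intro h
    let C : Set (Matrix (Fin 2) (Fin 2) ℂ × ℂ) :=
      {q | q.1 1 0 = 0 ∧ q.1 0 0 * q.1 1 1 = 1 ∧ q.2 * q.1 0 1 = q.1 1 1 - q.1 0 0}
    have hc : ∀ i j, Continuous (fun q : Matrix (Fin 2) (Fin 2) ℂ × ℂ => q.1 i j) :=
      fun i j => continuous_fst.matrix_elem i j
    have hC : IsClosed C := by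
      refine (isClosed_eq (hc 1 0) continuous_const).inter
        ((isClosed_eq ((hc 0 0).mul (hc 1 1)) continuous_const).inter
          (isClosed_eq (continuous_snd.mul (hc 0 1)) ((hc 1 1).sub (hc 0 0))))
    have hS : conjTorusFamily ⊆ C := by
      rintro q ⟨a, v, ha, hv, rfl⟩
      rw [conj_formula]
      simp [C, ha, hv]
    obtain ⟨h10, hd, he⟩ := closure_minimal hS hC h
    simp only [zero_mul] at h10 hd he
    have he' : M 1 1 = M 0 0 := (sub_eq_zero.1 he.symm)
    rw [he'] at hd
    rcases mul_self_eq_one_iff.1 hd with h0 | h0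
    · left
      refine ⟨M 0 1, ?_⟩
      ext i j
      fin_cases i <;> fin_cases j <;> simp [phi, h10, he', h0]
    · right
      refine ⟨-M 0 1, ?_⟩
      ext i j
      fin_cases i <;> fin_cases j <;> simp [phi, h10, he', h0]
  · rintro (⟨u, rfl⟩ | ⟨u, rfl⟩)
    · have := mem_closure_aux 1 u (by simp)
      simpa [phi] using this
    · have := mem_closure_aux (-1) u (by simp)
      simpa [phi] using this
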